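/- arXiv:2209.12718 — 3 statements merged into one kernel-verified Lean document; each statement's English description precedes it below -/
import Mathlib

section
/- Let (R, m) be a Noetherian local ring of positive depth and x ∈ m a non-zerodivisor on R. If R satisfies (SACC), then R/xR satisfies (SAC). -/
open CategoryTheory

/-- The `i`-th Ext group of `R`-modules `M` and `N`. -/
noncomputable abbrev ExtGroup (R : Type) [CommRing R] (M N : ModuleCat.{0} R) (i : ℕ) : Type :=
  (((Ext R (ModuleCat.{0} R) i).obj (Opposite.op M)).obj N)

/-- The symmetric Auslander condition (SAC): for every finitely generated `R`-module `M`,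
if `Ext^i(M,R) = 0` for all `i > 0` and `Ext^i(M,M) = 0` for `i ≫ 0`,
then `Ext^i(M,M) = 0` for all `i > 0`. -/
def SAC (R : Type) [CommRing R] : Prop :=
  ∀ M : ModuleCat.{0} R, Module.Finite R M →
    (∀ i : ℕ, 0 < i → Subsingleton (ExtGroup R M (ModuleCat.of R R) i)) →
    (∃ N : ℕ, ∀ i : ℕ, N < i → Subsingleton (ExtGroup R M M i)) →
    ∀ i : ℕ, 0 < i → Subsingleton (ExtGroup R M M i)

/-- `M` has constant rank `r`: the localization of `M` at every associated prime of `R`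
is free of rank `r`. -/
def HasConstRank (R : Type) [CommRing R] (M : ModuleCat.{0} R) (r : ℕ) : Prop :=
  ∀ (p : Ideal R) [p.IsPrime], p ∈ associatedPrimes R R →
    Nonempty ((LocalizedModule p.primeCompl M) ≃ₗ[Localization.AtPrime p]
      (Fin r → Localization.AtPrime p))

/-- The symmetric Auslander condition for modules with constant rank (SACC). -/
def SACC (R : Type) [CommRing R] : Prop :=
  ∀ M : ModuleCat.{0} R, Module.Finite R M → (∃ r : ℕ, HasConstRank R M r) →
    (∀ i : ℕ, 0 < i → Subsingleton (ExtGroup R M (ModuleCat.of R R) i)) →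
    (∃ N : ℕ, ∀ i : ℕ, N < i → Subsingleton (ExtGroup R M M i)) →
    ∀ i : ℕ, 0 < i → Subsingleton (ExtGroup R M M i)

/-!
Write `S = R/xR`. Given a finitely generated `S`-module `M`, choose a short exact sequence
`0 → N → F → M → 0` with `F` finite free over `R`. Every associated prime of `R` misses `x`, and
`x` kills `M`, so `N` has constant rank. Multiplication by `x` gives, by the snake lemma, an exact
sequence `0 → M → N/xN → F/xF → M → 0` of `S`-modules with `F/xF` free, and
`Ext_S^i(N/xN, X) = Ext_R^i(N, X)` for every `S`-module `X`. Hence the vanishing of `Ext_S(M, S)`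
and of the high `Ext_S(M, M)` passes to `Ext_R(N, R)` (by Nakayama) and to the high `Ext_R(N, N)`.
Now (SACC) kills all of `Ext_R^{>0}(N, N)`, hence all of `Ext_R^{>0}(N, M)`, and then the four-term
sequence shows that `Ext_S^{i+2}(M, M) = 0` implies `Ext_S^i(M, M) = 0`, so the vanishing descends
from large `i` to all `i > 0`.
-/

universe u v w

section AbelianCategory

open Abelian

variable {C : Type u} [Category.{v} C] [Abelian C]

lemma subsingleton_derivedExt_iff_cocycle_eq_coboundary (R : Type*) [Ring R] [Linear R C]
    [EnoughProjectives C] {X : C} (P : ProjectiveResolution X) (Y : C) (n : ℕ) :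
    Subsingleton (((Ext R C (n + 1)).obj (Opposite.op X)).obj Y) ↔
      ∀ f : P.complex.X (n + 1) ⟶ Y, P.complex.d (n + 2) (n + 1) ≫ f = 0 →
        ∃ g : P.complex.X n ⟶ Y, P.complex.d (n + 1) n ≫ g = f := by
  rw [← ModuleCat.isZero_iff_subsingleton, (P.isoExt (n + 1) Y).isZero_iff,
    ← HomologicalComplex.exactAt_iff_isZero_homology,
    HomologicalComplex.exactAt_iff' _ n (n + 1) (n + 2) (by simp) (by simp),
    ShortComplex.moduleCat_exact_iff]
  rfl

section HasExt

variable [HasExt.{w} C] {S : ShortComplex C}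

lemma subsingleton_ext_X₁_left (hS : S.ShortExact) {Y : C} {n : ℕ}
    (h₂ : Subsingleton (Abelian.Ext S.X₂ Y n)) (h₃ : Subsingleton (Abelian.Ext S.X₃ Y (n + 1))) :
    Subsingleton (Abelian.Ext S.X₁ Y n) := by
  refine subsingleton_of_forall_eq 0 fun e => ?_
  obtain ⟨e₂, rfl⟩ :=
    Ext.contravariant_sequence_exact₁ hS Y e (add_comm 1 n) (Subsingleton.elim _ _)
  rw [Subsingleton.elim e₂ 0, Ext.comp_zero]

lemma subsingleton_ext_X₂_left (hS : S.ShortExact) {Y : C} {n : ℕ}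
    (h₁ : Subsingleton (Abelian.Ext S.X₁ Y n)) (h₃ : Subsingleton (Abelian.Ext S.X₃ Y n)) :
    Subsingleton (Abelian.Ext S.X₂ Y n) := by
  refine subsingleton_of_forall_eq 0 fun e => ?_
  obtain ⟨e₃, rfl⟩ := Ext.contravariant_sequence_exact₂ hS Y e (Subsingleton.elim _ _)
  rw [Subsingleton.elim e₃ 0, Ext.comp_zero]

lemma subsingleton_ext_X₃_left (hS : S.ShortExact) {Y : C} {n : ℕ}
    (h₁ : Subsingleton (Abelian.Ext S.X₁ Y n)) (h₂ : Subsingleton (Abelian.Ext S.X₂ Y (n + 1))) :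
    Subsingleton (Abelian.Ext S.X₃ Y (n + 1)) := by
  refine subsingleton_of_forall_eq 0 fun e => ?_
  obtain ⟨e₁, rfl⟩ :=
    Ext.contravariant_sequence_exact₃ hS Y e (Subsingleton.elim _ _) (add_comm 1 n)
  rw [Subsingleton.elim e₁ 0, Ext.comp_zero]

lemma subsingleton_ext_X₁_right (hS : S.ShortExact) {X : C} {n : ℕ}
    (h₃ : Subsingleton (Abelian.Ext X S.X₃ n)) (h₂ : Subsingleton (Abelian.Ext X S.X₂ (n + 1))) :
    Subsingleton (Abelian.Ext X S.X₁ (n + 1)) := by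
  refine subsingleton_of_forall_eq 0 fun e => ?_
  obtain ⟨e₃, rfl⟩ := Ext.covariant_sequence_exact₁ X hS e (Subsingleton.elim _ _) rfl
  rw [Subsingleton.elim e₃ 0, Ext.zero_comp]

lemma subsingleton_ext_X₃_right (hS : S.ShortExact) {X : C} {n : ℕ}
    (h₂ : Subsingleton (Abelian.Ext X S.X₂ n)) (h₁ : Subsingleton (Abelian.Ext X S.X₁ (n + 1))) :
    Subsingleton (Abelian.Ext X S.X₃ n) := by
  refine subsingleton_of_forall_eq 0 fun e => ?_
  obtain ⟨e₂, rfl⟩ := Ext.covariant_sequence_exact₃ X hS e rfl (Subsingleton.elim _ _)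
  rw [Subsingleton.elim e₂ 0, Ext.zero_comp]

lemma subsingleton_ext_X₃_succ_iff (hS : S.ShortExact) [Projective S.X₂] (Y : C) (n : ℕ) :
    Subsingleton (Abelian.Ext S.X₃ Y (n + 2)) ↔ Subsingleton (Abelian.Ext S.X₁ Y (n + 1)) :=
  ⟨subsingleton_ext_X₁_left hS (Ext.subsingleton_of_projective _ _ n),
    fun h => subsingleton_ext_X₃_left hS h (Ext.subsingleton_of_projective _ _ (n + 1))⟩

lemma subsingleton_ext_X₃_one_iff (hS : S.ShortExact) [Projective S.X₂] (Y : C) :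
    Subsingleton (Abelian.Ext S.X₃ Y 1) ↔ ∀ f : S.X₁ ⟶ Y, ∃ g : S.X₂ ⟶ Y, S.f ≫ g = f := by
  refine ⟨fun h f => ?_, fun h => subsingleton_of_forall_eq 0 fun e => ?_⟩
  · obtain ⟨e, he⟩ := Ext.contravariant_sequence_exact₁ hS Y (Ext.mk₀ f) (add_zero 1)
      (Subsingleton.elim _ _)
    obtain ⟨g, rfl⟩ := (Ext.mk₀_bijective _ _).2 e
    rw [Ext.mk₀_comp_mk₀] at he
    exact ⟨g, (Ext.mk₀_bijective _ _).1 he⟩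
  · have := Ext.subsingleton_of_projective S.X₂ Y 0
    obtain ⟨e₁, rfl⟩ :=
      Ext.contravariant_sequence_exact₃ hS Y e (Subsingleton.elim _ _) (add_zero 1)
    obtain ⟨f, rfl⟩ := (Ext.mk₀_bijective _ _).2 e₁
    obtain ⟨g, rfl⟩ := h f
    rw [← Ext.mk₀_comp_mk₀]
    exact hS.extClass_comp_assoc _

lemma subsingleton_abelianExt_iff_cocycle_eq_coboundary {X : C} (P : ProjectiveResolution X)
    (Y : C) (n : ℕ) :
    Subsingleton (Abelian.Ext X Y (n + 1)) ↔
      ∀ f : P.complex.X (n + 1) ⟶ Y, P.complex.d (n + 2) (n + 1) ≫ f = 0 →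
        ∃ g : P.complex.X n ⟶ Y, P.complex.d (n + 1) n ≫ g = f := by
  refine ⟨fun h f hf => (P.extMk_eq_zero_iff f (n + 2) rfl hf n rfl).1 (Subsingleton.elim _ _),
    fun h => subsingleton_of_forall_eq 0 fun e => ?_⟩
  obtain ⟨f, hf, rfl⟩ := P.extMk_surjective e (n + 2) rfl
  exact (P.extMk_eq_zero_iff f (n + 2) rfl hf n rfl).2 (h f hf)

lemma subsingleton_derivedExt_iff_abelianExt (R : Type*) [Ring R] [Linear R C]
    [EnoughProjectives C] (X Y : C) (n : ℕ) :
    Subsingleton (((Ext R C (n + 1)).obj (Opposite.op X)).obj Y) ↔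
      Subsingleton (Abelian.Ext X Y (n + 1)) := by
  rw [subsingleton_derivedExt_iff_cocycle_eq_coboundary R (ProjectiveResolution.of X),
    subsingleton_abelianExt_iff_cocycle_eq_coboundary (ProjectiveResolution.of X)]

end HasExt

end AbelianCategory

/-- Vanishing of `Ext_R^i(A, B)`, for unbundled modules and with the Ext groups of the derived
category, which carry long exact sequences; `extVanishes_iff_subsingleton_extGroup` compares it
with the Ext groups defined by derived functors. -/
abbrev ExtVanishes (R : Type u) [CommRing R] (A B : Type u) [AddCommGroup A] [Module R A]
    [AddCommGroup B] [Module R B] (i : ℕ) : Prop :=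
  Subsingleton (Abelian.Ext.{u} (ModuleCat.of R A) (ModuleCat.of R B) i)

section ExtVanishes

variable {R : Type u} [CommRing R] {A B C D X : Type u} [AddCommGroup A] [Module R A]
  [AddCommGroup B] [Module R B] [AddCommGroup C] [Module R C] [AddCommGroup D] [Module R D]
  [AddCommGroup X] [Module R X]

lemma extVanishes_iff_subsingleton_extGroup {R : Type} [CommRing R] {A B : Type}
    [AddCommGroup A] [Module R A] [AddCommGroup B] [Module R B] {i : ℕ} (hi : 0 < i) :
    ExtVanishes R A B i ↔ Subsingleton (ExtGroup R (ModuleCat.of R A) (ModuleCat.of R B) i) := by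
  obtain ⟨n, rfl⟩ := Nat.exists_eq_succ_of_ne_zero hi.ne'
  exact (subsingleton_derivedExt_iff_abelianExt R _ _ n).symm

lemma extVanishes_succ_iff_of_shortExact [Module.Projective R B] {f : A →ₗ[R] B} {g : B →ₗ[R] C}
    (hf : Function.Injective f) (hfg : Function.Exact f g) (hg : Function.Surjective g) (n : ℕ) :
    ExtVanishes R C X (n + 2) ↔ ExtVanishes R A X (n + 1) :=
  subsingleton_ext_X₃_succ_iff (ModuleCat.shortComplex_shortExact
    (ModuleCat.shortComplexOfCompEqZero f g hfg.linearMap_comp_eq_zero) hfg hf hg) _ n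

lemma extVanishes_one_iff_of_shortExact [Module.Projective R B] {f : A →ₗ[R] B} {g : B →ₗ[R] C}
    (hf : Function.Injective f) (hfg : Function.Exact f g) (hg : Function.Surjective g) :
    ExtVanishes R C X 1 ↔ ∀ φ : A →ₗ[R] X, ∃ ψ : B →ₗ[R] X, ψ ∘ₗ f = φ := by
  refine (subsingleton_ext_X₃_one_iff (ModuleCat.shortComplex_shortExact
    (ModuleCat.shortComplexOfCompEqZero f g hfg.linearMap_comp_eq_zero) hfg hf hg) _).trans
    ⟨fun h φ => ?_, fun h φ => ?_⟩
  · obtain ⟨ψ, hψ⟩ := h (ModuleCat.ofHom φ)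
    exact ⟨ψ.hom, congrArg ModuleCat.Hom.hom hψ⟩
  · obtain ⟨ψ, hψ⟩ := h φ.hom
    exact ⟨ModuleCat.ofHom ψ, ModuleCat.hom_ext hψ⟩

section FourTerm

variable {f : A →ₗ[R] B} {g : B →ₗ[R] C} {h : C →ₗ[R] D}

lemma shortExact_codRestrict_ker (hf : Function.Injective f) (hfg : Function.Exact f g)
    (hgh : Function.Exact g h) :
    (ModuleCat.shortComplexOfCompEqZero f
      (g.codRestrict (LinearMap.ker h) hgh.apply_apply_eq_zero)
      (by ext a; exact hfg.apply_apply_eq_zero a)).ShortExact := by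
  refine ModuleCat.shortComplex_shortExact _ (fun b => ?_) hf ?_
  · exact Subtype.ext_iff.trans (hfg b)
  · rintro ⟨c, hc⟩
    obtain ⟨b, rfl⟩ := (hgh c).1 hc
    exact ⟨b, rfl⟩

lemma extVanishes_second_of_exact [Module.Projective R C] (hf : Function.Injective f)
    (hfg : Function.Exact f g) (hgh : Function.Exact g h) (hh : Function.Surjective h) {n : ℕ}
    (hA : ExtVanishes R A X (n + 1)) (hD : ExtVanishes R D X (n + 2)) :
    ExtVanishes R B X (n + 1) :=
  subsingleton_ext_X₂_left (shortExact_codRestrict_ker hf hfg hgh) hA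
    ((extVanishes_succ_iff_of_shortExact (LinearMap.ker h).injective_subtype
      h.exact_subtype_ker_map hh n).1 hD)

lemma extVanishes_first_of_exact [Module.Projective R C] (hf : Function.Injective f)
    (hfg : Function.Exact f g) (hgh : Function.Exact g h) (hh : Function.Surjective h) {n : ℕ}
    (hB : ExtVanishes R B X (n + 1)) (hD : ExtVanishes R D X (n + 3)) :
    ExtVanishes R A X (n + 1) :=
  subsingleton_ext_X₁_left (shortExact_codRestrict_ker hf hfg hgh) hB
    ((extVanishes_succ_iff_of_shortExact (LinearMap.ker h).injective_subtype
      h.exact_subtype_ker_map hh (n + 1)).1 hD)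

end FourTerm

lemma ExtVanishes.of_free_right (F : Type u) [AddCommGroup F] [Module R F] [Module.Free R F]
    [Module.Finite R F] {i : ℕ} (h : ExtVanishes R A R i) : ExtVanishes R A F i := by
  let b := Module.Free.chooseBasis R F
  have id_eq_sum : 𝟙 (ModuleCat.of R F) = ∑ j, ModuleCat.ofHom (b.coord j) ≫
      ModuleCat.ofHom (LinearMap.toSpanSingleton R F (b j)) := by
    ext v
    simp [ModuleCat.hom_sum, b.sum_repr]
  refine subsingleton_of_forall_eq 0 fun e => ?_
  rw [← Abelian.Ext.comp_mk₀_id e, id_eq_sum, Abelian.Ext.mk₀_sum, Abelian.Ext.comp_sum]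
  refine Finset.sum_eq_zero fun j _ => ?_
  rw [← Abelian.Ext.mk₀_comp_mk₀, ← Abelian.Ext.comp_assoc_of_third_deg_zero,
    h.elim (e.comp _ _) 0, Abelian.Ext.zero_comp]

lemma ExtVanishes.of_quotSMulTop_right [IsNoetherianRing R] [Module.Finite R A] [Module.Finite R X]
    {x : R} (hx : x ∈ (⊥ : Ideal R).jacobson) (hreg : IsSMulRegular X x) {i : ℕ}
    (h : ExtVanishes R A (QuotSMulTop x X) i) : ExtVanishes R A X i := by
  by_contra hne
  rw [ExtVanishes, not_subsingleton_iff_nontrivial] at hne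
  refine Submodule.top_ne_pointwise_smul_of_mem_jacobson_annihilator
    (M := Abelian.Ext.{u} (ModuleCat.of R A) (ModuleCat.of R X) i)
    (Ideal.jacobson_mono bot_le hx) (eq_top_iff.2 fun e _ => ?_).symm
  obtain ⟨e', rfl⟩ := Abelian.Ext.covariant_sequence_exact₂ (ModuleCat.of R A)
    (IsSMulRegular.smulShortComplex_shortExact (M := ModuleCat.of R X) hreg) e (h.elim _ _)
  rw [ModuleCat.smulShortComplex_f_eq_smul_id]
  exact (Abelian.Ext.smul_eq_comp_mk₀ e' x) ▸ Submodule.smul_mem_pointwise_smul _ _ _ trivial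

end ExtVanishes

section Reduction

open scoped Pointwise

variable {R : Type u} [CommRing R] {x : R}

section QuotSMulTop

variable {N F M : Type*} [AddCommGroup N] [Module R N] [AddCommGroup F] [Module R F]
  [AddCommGroup M] [Module R M] {f : N →ₗ[R] F} {g : F →ₗ[R] M}

variable (x) in
/-- The `R/xR`-linear map `N/xN → F/xF` induced by an `R`-linear map `N → F`; Mathlib's
`QuotSMulTop.map` is only `R`-linear. -/
noncomputable def quotSMulTopMap (f : N →ₗ[R] F) :
    QuotSMulTop x N →ₗ[R ⧸ Ideal.span {x}] QuotSMulTop x F :=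
  (QuotSMulTop.map x f).extendScalarsOfSurjective Ideal.Quotient.mk_surjective

lemma coe_quotSMulTopMap (f : N →ₗ[R] F) : ⇑(quotSMulTopMap x f) = QuotSMulTop.map x f := rfl

lemma quotSMulTopMap_injective (hf : Function.Injective f) (hfg : Function.Exact f g)
    (hM : IsSMulRegular M x) : Function.Injective (quotSMulTopMap x f) := by
  have h := QuotSMulTop.map_first_exact_on_four_term_exact_of_isSMulRegular_last
    ((LinearMap.exact_zero_iff_injective PUnit f).2 hf) hfg hM
  rw [map_zero] at h
  rw [coe_quotSMulTopMap]
  exact (LinearMap.exact_zero_iff_injective _ _).1 h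

lemma quotSMulTopMap_surjective (hg : Function.Surjective g) :
    Function.Surjective (quotSMulTopMap x g) :=
  QuotSMulTop.map_surjective x hg

lemma exact_quotSMulTopMap (hfg : Function.Exact f g) (hg : Function.Surjective g) :
    Function.Exact (quotSMulTopMap x f) (quotSMulTopMap x g) :=
  QuotSMulTop.map_exact x hfg hg

lemma exact_lsmul_mkQ :
    Function.Exact (LinearMap.lsmul R N x) (x • (⊤ : Submodule R N)).mkQ := by
  rw [LinearMap.exact_iff, Submodule.ker_mkQ]
  exact Submodule.map_top _

section Lift

variable [Module (R ⧸ Ideal.span {x}) M] [IsScalarTower R (R ⧸ Ideal.span {x}) M]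

lemma smul_eq_zero_of_module_quotient_span_singleton (m : M) : x • m = 0 := by
  rw [← algebraMap_smul (R ⧸ Ideal.span {x}) x m, Ideal.Quotient.algebraMap_eq,
    Ideal.Quotient.mk_singleton_self, zero_smul]

/-- The `R/xR`-linear map `F/xF → M` induced by an `R`-linear map from `F` to an
`R/xR`-module `M`. -/
noncomputable def quotSMulTopLift (g : F →ₗ[R] M) :
    QuotSMulTop x F →ₗ[R ⧸ Ideal.span {x}] M :=
  ((x • (⊤ : Submodule R F)).liftQ g (by
    rintro _ ⟨v, -, rfl⟩
    exact (map_smul g x v).trans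
      (smul_eq_zero_of_module_quotient_span_singleton _))).extendScalarsOfSurjective
    Ideal.Quotient.mk_surjective

@[simp]
lemma quotSMulTopLift_mk (g : F →ₗ[R] M) (v : F) :
    quotSMulTopLift g (Submodule.Quotient.mk v : QuotSMulTop x F) = g v := rfl

lemma quotSMulTopLift_surjective (hg : Function.Surjective g) :
    Function.Surjective (quotSMulTopLift g : QuotSMulTop x F →ₗ[R ⧸ Ideal.span {x}] M) :=
  fun m => (hg m).imp' Submodule.Quotient.mk fun _ h => h

lemma exact_quotSMulTopMap_quotSMulTopLift (hfg : Function.Exact f g) :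
    Function.Exact (quotSMulTopMap x f)
      (quotSMulTopLift g : QuotSMulTop x F →ₗ[R ⧸ Ideal.span {x}] M) := by
  intro y
  obtain ⟨v, rfl⟩ := Submodule.Quotient.mk_surjective _ y
  rw [quotSMulTopLift_mk, hfg]
  refine ⟨fun ⟨n, hn⟩ => ⟨Submodule.Quotient.mk n, congrArg Submodule.Quotient.mk hn⟩,
    fun ⟨y, hy⟩ => ?_⟩
  obtain ⟨n, rfl⟩ := Submodule.Quotient.mk_surjective _ y
  have hgv : g (f n) = g v :=
    congrArg (quotSMulTopLift g : QuotSMulTop x F →ₗ[R ⧸ Ideal.span {x}] M) hy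
  exact (hfg v).1 (hgv.symm.trans (hfg.apply_apply_eq_zero n))

-- The snake lemma for multiplication by `x` on `0 → N → F → M → 0`; it is zero on `M`.
lemma exists_injective_exact_quotSMulTopMap (hf : Function.Injective f)
    (hfg : Function.Exact f g) (hg : Function.Surjective g) (hF : IsSMulRegular F x) :
    ∃ δ : M →ₗ[R ⧸ Ideal.span {x}] QuotSMulTop x N,
      Function.Injective δ ∧ Function.Exact δ (quotSMulTopMap x f) := by
  have hfx : f ∘ₗ LinearMap.lsmul R N x = LinearMap.lsmul R F x ∘ₗ f := by ext; simp
  have hgx : g ∘ₗ LinearMap.lsmul R F x = LinearMap.lsmul R M x ∘ₗ g := by ext; simp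
  have ker_F : Function.Exact (0 : PUnit →ₗ[R] F) (LinearMap.lsmul R F x) :=
    (LinearMap.exact_zero_iff_injective _ _).2 hF
  have ker_M : Function.Exact (LinearMap.id : M →ₗ[R] M) (LinearMap.lsmul R M x) := fun m =>
    ⟨fun _ => ⟨m, rfl⟩, fun _ => smul_eq_zero_of_module_quotient_span_singleton m⟩
  let δ := SnakeLemma.δ' _ _ _ f g hfg f g hfg hfx hgx _ ker_M _ exact_lsmul_mkQ hg hf
  refine ⟨δ.extendScalarsOfSurjective Ideal.Quotient.mk_surjective, ?_, ?_⟩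
  · exact (LinearMap.exact_zero_iff_injective PUnit _).1 <|
      SnakeLemma.exact_δ'_right _ _ _ f g hfg f g hfg hfx hgx _ ker_F _ ker_M _ exact_lsmul_mkQ
        hg hf 0 (by ext; simp) Function.injective_id
  · exact SnakeLemma.exact_δ'_left _ _ _ f g hfg f g hfg hfx hgx _ ker_M _ exact_lsmul_mkQ
      _ exact_lsmul_mkQ hg hf (QuotSMulTop.map x f) (QuotSMulTop.map_comp_mkQ x f)
      (Submodule.mkQ_surjective _)

lemma forall_exists_comp_eq_iff_quotSMulTopMap (f : N →ₗ[R] F) :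
    (∀ φ : N →ₗ[R] M, ∃ ψ : F →ₗ[R] M, ψ ∘ₗ f = φ) ↔
      ∀ φ : QuotSMulTop x N →ₗ[R ⧸ Ideal.span {x}] M,
        ∃ ψ : QuotSMulTop x F →ₗ[R ⧸ Ideal.span {x}] M, ψ ∘ₗ quotSMulTopMap x f = φ := by
  refine ⟨fun h φ => ?_, fun h φ => ?_⟩
  · obtain ⟨ψ, hψ⟩ := h (φ.restrictScalars R ∘ₗ Submodule.mkQ _)
    refine ⟨quotSMulTopLift ψ, LinearMap.ext fun y => ?_⟩
    obtain ⟨n, rfl⟩ := Submodule.Quotient.mk_surjective _ y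
    exact LinearMap.congr_fun hψ n
  · obtain ⟨ψ, hψ⟩ := h (quotSMulTopLift φ)
    exact ⟨ψ.restrictScalars R ∘ₗ Submodule.mkQ _,
      LinearMap.ext fun n => LinearMap.congr_fun hψ (Submodule.Quotient.mk n)⟩

end Lift

end QuotSMulTop

section ChangeOfRings

lemma exists_free_surjective (R : Type u) [CommRing R] (N : Type u) [AddCommGroup N]
    [Module R N] :
    ∃ (F : Type u) (_ : AddCommGroup F) (_ : Module R F) (g : F →ₗ[R] N),
      Module.Free R F ∧ Function.Surjective g :=
  ⟨N →₀ R, inferInstance, inferInstance, Finsupp.linearCombination R id, inferInstance,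
    Finsupp.linearCombination_id_surjective R N⟩

lemma isSMulRegular_of_flat (hx : IsSMulRegular R x) (F : Type*) [AddCommGroup F] [Module R F]
    [Module.Flat R F] : IsSMulRegular F x :=
  Module.Flat.isSMulRegular_of_isRegular (isLeftRegular_iff_isRegular.1 hx.isLeftRegular)

variable {N F M X : Type u} [AddCommGroup N] [Module R N] [AddCommGroup F] [Module R F]
  [Module.Free R F] [AddCommGroup M] [Module R M] [AddCommGroup X]
  [Module (R ⧸ Ideal.span {x}) X] {f : N →ₗ[R] F} {g : F →ₗ[R] M}

lemma extVanishes_quotSMulTop_succ_iff_of_shortExact (hf : Function.Injective f)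
    (hfg : Function.Exact f g) (hg : Function.Surjective g) (hM : IsSMulRegular M x) (n : ℕ) :
    ExtVanishes (R ⧸ Ideal.span {x}) (QuotSMulTop x M) X (n + 2) ↔
      ExtVanishes (R ⧸ Ideal.span {x}) (QuotSMulTop x N) X (n + 1) :=
  extVanishes_succ_iff_of_shortExact (quotSMulTopMap_injective hf hfg hM)
    (exact_quotSMulTopMap hfg hg) (quotSMulTopMap_surjective hg) n

variable [Module R X] [IsScalarTower R (R ⧸ Ideal.span {x}) X]

lemma extVanishes_quotSMulTop_one_iff (hM : IsSMulRegular M x) :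
    ExtVanishes (R ⧸ Ideal.span {x}) (QuotSMulTop x M) X 1 ↔ ExtVanishes R M X 1 := by
  obtain ⟨F, _, _, g, _, hg⟩ := exists_free_surjective R M
  have hf := (LinearMap.ker g).injective_subtype
  have hfg := g.exact_subtype_ker_map
  rw [extVanishes_one_iff_of_shortExact hf hfg hg, extVanishes_one_iff_of_shortExact
    (quotSMulTopMap_injective hf hfg hM) (exact_quotSMulTopMap hfg hg)
    (quotSMulTopMap_surjective hg), forall_exists_comp_eq_iff_quotSMulTopMap (x := x)]

theorem extVanishes_quotSMulTop_iff (hx : IsSMulRegular R x) (hM : IsSMulRegular M x) (n : ℕ) :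
    ExtVanishes (R ⧸ Ideal.span {x}) (QuotSMulTop x M) X (n + 1) ↔
      ExtVanishes R M X (n + 1) := by
  induction n generalizing M with
  | zero => exact extVanishes_quotSMulTop_one_iff hM
  | succ n ih =>
    obtain ⟨F, _, _, g, _, hg⟩ := exists_free_surjective R M
    have hf := (LinearMap.ker g).injective_subtype
    have hfg := g.exact_subtype_ker_map
    have hK : IsSMulRegular (LinearMap.ker g) x := (isSMulRegular_of_flat hx F).submodule _ _
    rw [extVanishes_quotSMulTop_succ_iff_of_shortExact hf hfg hg hM, ih hK,
      extVanishes_succ_iff_of_shortExact hf hfg hg]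

variable [Module (R ⧸ Ideal.span {x}) M] [IsScalarTower R (R ⧸ Ideal.span {x}) M]

lemma extVanishes_syzygy_of_quotient (hx : IsSMulRegular R x) (hf : Function.Injective f)
    (hfg : Function.Exact f g) (hg : Function.Surjective g) {n : ℕ}
    (h₁ : ExtVanishes (R ⧸ Ideal.span {x}) M X (n + 1))
    (h₂ : ExtVanishes (R ⧸ Ideal.span {x}) M X (n + 2)) : ExtVanishes R N X (n + 1) := by
  have hF : IsSMulRegular F x := isSMulRegular_of_flat hx F
  obtain ⟨δ, hδ, hδf⟩ := exists_injective_exact_quotSMulTopMap hf hfg hg hF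
  exact (extVanishes_quotSMulTop_iff hx (hF.of_injective f hf) n).1 <|
    extVanishes_second_of_exact hδ hδf (exact_quotSMulTopMap_quotSMulTopLift hfg)
      (quotSMulTopLift_surjective hg) h₁ h₂

lemma extVanishes_quotient_of_syzygy (hx : IsSMulRegular R x) (hf : Function.Injective f)
    (hfg : Function.Exact f g) (hg : Function.Surjective g) {n : ℕ}
    (h₁ : ExtVanishes R N X (n + 1)) (h₃ : ExtVanishes (R ⧸ Ideal.span {x}) M X (n + 3)) :
    ExtVanishes (R ⧸ Ideal.span {x}) M X (n + 1) := by
  have hF : IsSMulRegular F x := isSMulRegular_of_flat hx F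
  obtain ⟨δ, hδ, hδf⟩ := exists_injective_exact_quotSMulTopMap hf hfg hg hF
  exact extVanishes_first_of_exact hδ hδf (exact_quotSMulTopMap_quotSMulTopLift hfg)
    (quotSMulTopLift_surjective hg)
    ((extVanishes_quotSMulTop_iff hx (hF.of_injective f hf) n).2 h₁) h₃

end ChangeOfRings

end Reduction

lemma forall_of_forall_ge_of_add_two {P : ℕ → Prop} {n₀ : ℕ} (h : ∀ n ≥ n₀, P n)
    (step : ∀ n, P (n + 2) → P n) (n : ℕ) : P n := by
  have descend (k : ℕ) : ∀ m, n₀ ≤ m + 2 * k → P m := by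
    induction k with
    | zero => exact h
    | succ k ih => exact fun m hm => step m (ih (m + 2) (by lia))
  exact descend n₀ n (by lia)

section AuslanderCondition

variable {R : Type} [CommRing R] {x : R}

lemma hasConstRank_of_exact [IsNoetherianRing R] {N F M : Type} [AddCommGroup N] [Module R N]
    [AddCommGroup F] [Module R F] [AddCommGroup M] [Module R M] {f : N →ₗ[R] F} {g : F →ₗ[R] M}
    {r : ℕ} (b : Module.Basis (Fin r) R F) (hf : Function.Injective f)
    (hfg : Function.Exact f g) (hx : IsSMulRegular R x) (hM : ∀ m : M, x • m = 0) :
    HasConstRank R (ModuleCat.of R N) r := by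
  intro p _ hp
  have hxp : x ∈ p.primeCompl := fun hmem => by
    have hnreg := Set.mem_biUnion (t := fun p : Ideal R => (p : Set R)) hp hmem
    rw [biUnion_associatedPrimes_eq_compl_regular] at hnreg
    exact hnreg hx
  have : Subsingleton (LocalizedModule p.primeCompl M) :=
    LocalizedModule.subsingleton_iff.2 fun m => ⟨x, hxp, hM m⟩
  have hsurj : Function.Surjective (LocalizedModule.map p.primeCompl f) := fun y =>
    (LocalizedModule.map_exact p.primeCompl f g hfg y).1 (Subsingleton.elim _ _)
  exact ⟨(LinearEquiv.ofBijective _ ⟨LocalizedModule.map_injective p.primeCompl f hf, hsurj⟩).trans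
    (b.ofIsLocalizedModule (Localization.AtPrime p) p.primeCompl
      (LocalizedModule.mkLinearMap p.primeCompl F)).equivFun⟩

lemma SACC.extVanishes_self (hR : SACC R) {N : Type} [AddCommGroup N] [Module R N]
    [Module.Finite R N] {r : ℕ} (hr : HasConstRank R (ModuleCat.of R N) r)
    (hNR : ∀ n, ExtVanishes R N R (n + 1))
    (hNN : ∃ n₀, ∀ n ≥ n₀, ExtVanishes R N N (n + 1)) (n : ℕ) : ExtVanishes R N N (n + 1) := by
  obtain ⟨n₀, hn₀⟩ := hNN
  refine (extVanishes_iff_subsingleton_extGroup n.succ_pos).2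
    (hR _ ‹_› ⟨r, hr⟩ (fun i hi => ?_) ⟨n₀, fun i hi => ?_⟩ _ n.succ_pos)
  · obtain ⟨n, rfl⟩ := Nat.exists_eq_succ_of_ne_zero hi.ne'
    exact (extVanishes_iff_subsingleton_extGroup n.succ_pos).1 (hNR n)
  · obtain ⟨n, rfl⟩ := Nat.exists_eq_succ_of_ne_zero (Nat.zero_lt_of_lt hi).ne'
    exact (extVanishes_iff_subsingleton_extGroup n.succ_pos).1 (hn₀ n (by lia))

theorem SACC.extVanishes_self_of_quotient [IsNoetherianRing R] (hR : SACC R)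
    (hx : x ∈ (⊥ : Ideal R).jacobson) (hreg : IsSMulRegular R x) {M : Type} [AddCommGroup M]
    [Module R M] [Module (R ⧸ Ideal.span {x}) M] [IsScalarTower R (R ⧸ Ideal.span {x}) M]
    [Module.Finite (R ⧸ Ideal.span {x}) M]
    (hMS : ∀ n, ExtVanishes (R ⧸ Ideal.span {x}) M (R ⧸ Ideal.span {x}) (n + 1))
    (hMM : ∃ n₀, ∀ n ≥ n₀, ExtVanishes (R ⧸ Ideal.span {x}) M M (n + 1)) (n : ℕ) :
    ExtVanishes (R ⧸ Ideal.span {x}) M M (n + 1) := by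
  have := Module.Finite.of_restrictScalars_finite R (R ⧸ Ideal.span {x}) (QuotSMulTop x R)
  have := Module.Finite.trans (R := R) (R ⧸ Ideal.span {x}) M
  obtain ⟨r, g, hg⟩ := Module.Finite.exists_fin' R M
  have hf := (LinearMap.ker g).injective_subtype
  have hfg := g.exact_subtype_ker_map
  have hS := LinearMap.shortExact_shortComplexKer hg
  obtain ⟨n₀, hn₀⟩ := hMM
  have hNR (n : ℕ) : ExtVanishes R (LinearMap.ker g) R (n + 1) :=
    .of_quotSMulTop_right hx hreg <|
      extVanishes_syzygy_of_quotient hreg hf hfg hg (.of_free_right _ (hMS n))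
        (.of_free_right _ (hMS (n + 1)))
  have hNF (n : ℕ) : ExtVanishes R (LinearMap.ker g) (Fin r → R) (n + 1) := (hNR n).of_free_right _
  have hNN_large (n : ℕ) (hn : n₀ ≤ n) :
      ExtVanishes R (LinearMap.ker g) (LinearMap.ker g) (n + 2) :=
    subsingleton_ext_X₁_right hS
      (extVanishes_syzygy_of_quotient hreg hf hfg hg (hn₀ n hn) (hn₀ (n + 1) (by lia)))
      (hNF (n + 1))
  have hNN (n : ℕ) : ExtVanishes R (LinearMap.ker g) (LinearMap.ker g) (n + 1) := by
    refine hR.extVanishes_self (hasConstRank_of_exact (Pi.basisFun R (Fin r)) hf hfg hreg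
      smul_eq_zero_of_module_quotient_span_singleton) hNR ⟨n₀ + 1, ?_⟩ n
    rintro (_ | n) hn
    · lia
    · exact hNN_large n (by lia)
  have hNM (n : ℕ) : ExtVanishes R (LinearMap.ker g) M (n + 1) :=
    subsingleton_ext_X₃_right hS (hNF n) (hNN (n + 1))
  exact forall_of_forall_ge_of_add_two hn₀
    (fun n => extVanishes_quotient_of_syzygy hreg hf hfg hg (hNM n)) n

end AuslanderCondition

theorem stmt_3_general (R : Type) [CommRing R] [IsNoetherianRing R] (x : R)
    (hx : x ∈ (⊥ : Ideal R).jacobson) (hreg : IsSMulRegular R x) (hR : SACC R) :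
    SAC (R ⧸ Ideal.span {x}) := by
  intro M _ hMS ⟨n₀, hMM⟩ i hi
  let : Module R M := Module.compHom M (algebraMap R (R ⧸ Ideal.span {x}))
  have : IsScalarTower R (R ⧸ Ideal.span {x}) M := .of_algebraMap_smul fun _ _ => rfl
  obtain ⟨n, rfl⟩ := Nat.exists_eq_succ_of_ne_zero hi.ne'
  exact (extVanishes_iff_subsingleton_extGroup hi).1 (hR.extVanishes_self_of_quotient hx hreg
    (fun n => (extVanishes_iff_subsingleton_extGroup n.succ_pos).2 (hMS _ n.succ_pos))
    ⟨n₀, fun n hn => (extVanishes_iff_subsingleton_extGroup n.succ_pos).2 (hMM _ (by lia))⟩ n)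

/-- If `R` is a Noetherian local ring of positive depth, `x` a non-zerodivisor in the
maximal ideal, and `R` satisfies (SACC), then `R/xR` satisfies (SAC). -/
theorem stmt_3 (R : Type) [CommRing R] [IsNoetherianRing R] [IsLocalRing R]
    (hdepth : ∃ y ∈ IsLocalRing.maximalIdeal R, IsSMulRegular R y)
    (x : R) (hx : x ∈ IsLocalRing.maximalIdeal R) (hreg : IsSMulRegular R x)
    (hR : SACC R) : SAC (R ⧸ Ideal.span {x}) :=
  stmt_3_general R x (IsLocalRing.maximalIdeal_le_jacobson ⊥ hx) hreg hR
end

section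
/- Let R be a Noetherian ring, M a finitely generated R-module with Rfd_R M ≤ 0, and X a finitely generated R-module with Ext_R^i(X, M) = 0 for all i > 0. Then Rfd_R Hom_R(X, M) ≤ 0, i.e., depth_{R_p} Hom_R(X,M)_p ≥ depth R_p for every prime p of R. -/
open CategoryTheory

/-- The depth of a module over a local ring: the infimum of the `i` with
`Ext^i(k, M) ≠ 0`, where `k` is the residue field. -/
noncomputable def moduleDepth (A : Type) [CommRing A] [IsLocalRing A]
    (M : Type) [AddCommGroup M] [Module A M] : ℕ∞ :=
  sInf {n : ℕ∞ | ∃ i : ℕ, n = i ∧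
    ¬ Subsingleton (ExtGroup A (ModuleCat.of A (IsLocalRing.ResidueField A))
      (ModuleCat.of A M) i)}

/-!
Choose `0 → Ω → P → X → 0` with `P` finite free. As `Ext¹(X, M) = 0`, the sequence
`0 → Hom(X, M) → Hom(P, M) → Hom(Ω, M) → 0` is exact, and it stays exact after localizing at `p`.
Since `Hom(P, M)` is a finite direct sum of copies of `M`, the depth lemma gives
`depth Hom(X, M)_p ≥ min (depth M_p) (depth Hom(Ω, M)_p + 1)`. Positive Ext groups into `M` vanish
for the syzygy `Ω` as well, so by induction on `n`, `n ≤ depth M_p` implies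
`n ≤ depth Hom(X, M)_p`.
-/

universe w v u v' u'

section LinearYoneda

variable (R : Type*) [Ring R] {C : Type u} [Category.{v} C]

lemma preservesFiniteLimits_linearYoneda_obj [Preadditive C] [Linear R C] (Y : C) :
    Limits.PreservesFiniteLimits ((linearYoneda R C).obj Y) := by
  have : Limits.PreservesFiniteLimits ((linearYoneda R C).obj Y ⋙ forget (ModuleCat.{v} R)) :=
    inferInstanceAs (Limits.PreservesFiniteLimits (yoneda.obj Y))
  exact Limits.preservesFiniteLimits_of_reflects_of_preserves _ (forget (ModuleCat.{v} R))

variable [Abelian C] [HasExt.{w} C]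

lemma exists_comp_eq_of_subsingleton_ext_one {S : ShortComplex C} (hS : S.ShortExact) {Y : C}
    [Subsingleton (Abelian.Ext S.X₃ Y 1)] (f : S.X₁ ⟶ Y) : ∃ g : S.X₂ ⟶ Y, S.f ≫ g = f := by
  obtain ⟨x, hx⟩ := Abelian.Ext.contravariant_sequence_exact₁ hS Y (Abelian.Ext.mk₀ f)
    (add_zero 1) (Subsingleton.elim _ _)
  obtain ⟨g, rfl⟩ := (Abelian.Ext.mk₀_bijective _ _).surjective x
  rw [Abelian.Ext.mk₀_comp_mk₀] at hx
  exact ⟨g, (Abelian.Ext.mk₀_bijective _ _).injective hx⟩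

lemma shortExact_op_map_linearYoneda_obj [Linear R C] {S : ShortComplex C} (hS : S.ShortExact)
    (Y : C) [Subsingleton (Abelian.Ext S.X₃ Y 1)] :
    (S.op.map ((linearYoneda R C).obj Y)).ShortExact := by
  have := preservesFiniteLimits_linearYoneda_obj R Y
  have : Epi (S.op.map ((linearYoneda R C).obj Y)).g :=
    (ModuleCat.epi_iff_surjective _).2 (exists_comp_eq_of_subsingleton_ext_one hS)
  have := hS.op.mono_f
  have := hS.op.exact.map_of_mono_of_preservesKernel ((linearYoneda R C).obj Y) this inferInstance
  exact { exact := this, mono_f := inferInstanceAs (Mono (((linearYoneda R C).obj Y).map _)) }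

end LinearYoneda

section DerivedExt

variable (R : Type*) [Ring R] {C : Type u} [Category.{v} C] [Abelian C]

lemma subsingleton_ext_succ_iff [HasExt.{w} C] {X : C} (P : ProjectiveResolution X) (Y : C)
    (n : ℕ) :
    Subsingleton (Abelian.Ext X Y (n + 1)) ↔
      ∀ f : P.complex.X (n + 1) ⟶ Y, P.complex.d (n + 2) (n + 1) ≫ f = 0 →
        ∃ g : P.complex.X n ⟶ Y, P.complex.d (n + 1) n ≫ g = f := by
  refine ⟨fun _ f hf ↦ (P.extMk_eq_zero_iff f _ rfl hf n rfl).1 (Subsingleton.elim _ _),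
    fun h ↦ subsingleton_of_forall_eq 0 fun x ↦ ?_⟩
  obtain ⟨f, hf, rfl⟩ := P.extMk_surjective x (n + 2) rfl
  exact (P.extMk_eq_zero_iff f _ rfl hf n rfl).2 (h f hf)

variable [Linear R C] [EnoughProjectives C]

lemma subsingleton_derivedExt_zero_iff (X Y : C) :
    Subsingleton (((Ext R C 0).obj (.op X)).obj Y) ↔ Subsingleton (X ⟶ Y) := by
  have := preservesFiniteLimits_linearYoneda_obj R Y
  have := Limits.preservesFiniteColimits_rightOp ((linearYoneda R C).obj Y)
  let e := (((linearYoneda R C).obj Y).rightOp.leftDerivedZeroIsoSelf.app X).unop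
  exact e.toLinearEquiv.symm.toEquiv.subsingleton_congr

lemma subsingleton_derivedExt_succ_iff {X : C} (P : ProjectiveResolution X) (Y : C) (n : ℕ) :
    Subsingleton (((Ext R C (n + 1)).obj (.op X)).obj Y) ↔
      ∀ f : P.complex.X (n + 1) ⟶ Y, P.complex.d (n + 2) (n + 1) ≫ f = 0 →
        ∃ g : P.complex.X n ⟶ Y, P.complex.d (n + 1) n ≫ g = f := by
  rw [← ModuleCat.isZero_iff_subsingleton, (P.isoExt (n + 1) Y).isZero_iff,
    ← HomologicalComplex.exactAt_iff_isZero_homology,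
    HomologicalComplex.exactAt_iff' _ n (n + 1) (n + 2) (by simp) (by simp),
    ShortComplex.moduleCat_exact_iff]
  rfl

lemma subsingleton_derivedExt_iff_subsingleton_ext [HasExt.{w} C] (X Y : C) (n : ℕ) :
    Subsingleton (((Ext R C n).obj (.op X)).obj Y) ↔ Subsingleton (Abelian.Ext X Y n) := by
  cases n with
  | zero =>
    rw [subsingleton_derivedExt_zero_iff, Abelian.Ext.homEquiv₀.subsingleton_congr]
  | succ n =>
    rw [subsingleton_derivedExt_succ_iff R (projectiveResolution X),
      subsingleton_ext_succ_iff (projectiveResolution X)]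

end DerivedExt

section ExtGrade

variable {C : Type u} [Category.{v} C] [Abelian C] [HasExt.{w} C]

/-- The grade of `Y` with respect to `K`: the least `i` with `Ext^i(K, Y) ≠ 0`, or `⊤` if there
is none. For `K` the residue field of a local ring this is the depth of `Y`. -/
noncomputable def extGrade (K Y : C) : ℕ∞ :=
  ⨅ (i : ℕ) (_ : Nontrivial (Abelian.Ext K Y i)), (i : ℕ∞)

lemma le_extGrade_iff {K Y : C} {n : ℕ∞} :
    n ≤ extGrade K Y ↔ ∀ i : ℕ, (i : ℕ∞) < n → Subsingleton (Abelian.Ext K Y i) := by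
  rw [extGrade, le_iInf₂_iff]
  refine forall_congr' fun i ↦ ?_
  rw [← not_subsingleton_iff_nontrivial, ← not_lt, not_imp_not]

lemma subsingleton_ext_of_lt_extGrade {K Y : C} {i : ℕ} (hi : i < extGrade K Y) :
    Subsingleton (Abelian.Ext K Y i) :=
  le_extGrade_iff.1 le_rfl i hi

lemma extGrade_congr_right (K : C) {Y Z : C} (e : Y ≅ Z) : extGrade K Y = extGrade K Z := by
  refine eq_of_forall_le_iff fun n ↦ ?_
  simp only [le_extGrade_iff]
  refine forall₂_congr fun i _ ↦ Equiv.subsingleton_congr ?_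
  exact ((Abelian.extFunctorObj K i).mapIso e).addCommGroupIsoToAddEquiv.toEquiv

lemma iInf_extGrade_le_extGrade_bicone_pt (K : C) {J : Type*} [Finite J] {Y : J → C}
    {b : Limits.Bicone Y} (hb : b.IsBilimit) : (⨅ j, extGrade K (Y j)) ≤ extGrade K b.pt := by
  have := Fintype.ofFinite J
  refine le_extGrade_iff.2 fun i hi ↦ ?_
  have (j : J) : Subsingleton (Abelian.Ext K (Y j) i) :=
    subsingleton_ext_of_lt_extGrade (hi.trans_le (iInf_le _ j))
  exact (Abelian.Ext.addEquivBiproduct K hb i).toEquiv.subsingleton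

lemma min_extGrade_le_extGrade_X₁ (K : C) {S : ShortComplex C} (hS : S.ShortExact) :
    min (extGrade K S.X₂) (extGrade K S.X₃ + 1) ≤ extGrade K S.X₁ := by
  refine le_extGrade_iff.2 fun i hi ↦ subsingleton_of_forall_eq 0 fun x ↦ ?_
  obtain ⟨hi₂, hi₃⟩ := lt_min_iff.1 hi
  have := subsingleton_ext_of_lt_extGrade hi₂
  cases i with
  | zero =>
    have := hS.mono_f
    obtain ⟨f, rfl⟩ := (Abelian.Ext.mk₀_bijective _ _).surjective x
    have hf : f ≫ S.f = 0 := Abelian.Ext.homEquiv₀.symm.injective (Subsingleton.elim _ _)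
    rw [Limits.zero_of_comp_mono S.f hf, Abelian.Ext.mk₀_zero]
  | succ i =>
    obtain ⟨y, rfl⟩ := Abelian.Ext.covariant_sequence_exact₁ K hS x (Subsingleton.elim _ _) rfl
    have : Subsingleton (Abelian.Ext K S.X₃ i) :=
      subsingleton_ext_of_lt_extGrade (lt_of_add_lt_add_right (by exact_mod_cast hi₃))
    rw [Subsingleton.elim y 0, Abelian.Ext.zero_comp]

lemma subsingleton_ext_X₁_of_projective_X₂ {S : ShortComplex C} (hS : S.ShortExact)
    [Projective S.X₂] (Y : C) {n : ℕ} (hn : 0 < n) [Subsingleton (Abelian.Ext S.X₃ Y (1 + n))] :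
    Subsingleton (Abelian.Ext S.X₁ Y n) := by
  refine subsingleton_of_forall_eq 0 fun x ↦ ?_
  obtain ⟨y, rfl⟩ := Abelian.Ext.contravariant_sequence_exact₁ hS Y x rfl (Subsingleton.elim _ _)
  obtain ⟨k, rfl⟩ := Nat.exists_eq_succ_of_ne_zero hn.ne'
  rw [Abelian.Ext.eq_zero_of_projective y, Abelian.Ext.comp_zero]

end ExtGrade

section HomModule

variable {R : Type u} [CommRing R] {D : Type u'} [Category.{v'} D] [Abelian D]
  [HasExt.{w} D] (F : ModuleCat.{v} R ⥤ D) [F.Additive] (K : D) (M : ModuleCat.{v} R)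

lemma extGrade_obj_le_extGrade_obj_hom_of_free (P : ModuleCat.{v} R)
    [Module.Finite R P] [Module.Free R P] :
    extGrade K (F.obj M) ≤ extGrade K (F.obj (.of R (P ⟶ M))) := by
  let b := (Module.Free.chooseBasis R P).reindex (Fintype.equivFin _)
  let Y (_ : Fin (Fintype.card (Module.Free.ChooseBasisIndex R P))) : ModuleCat.{v} R := M
  let e : ModuleCat.of R (P ⟶ M) ≅ ⨁ Y :=
    (ModuleCat.homLinearEquiv ≪≫ₗ (b.constr R).symm).toModuleIso ≪≫
      (ModuleCat.biproductIsoPi Y).symm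
  rw [extGrade_congr_right K (F.mapIso e)]
  calc extGrade K (F.obj M)
    _ ≤ ⨅ j, extGrade K (F.obj (Y j)) := le_iInf fun _ ↦ le_rfl
    _ ≤ extGrade K (F.mapBicone (Limits.biproduct.bicone Y)).pt :=
      iInf_extGrade_le_extGrade_bicone_pt K
        (Limits.isBilimitOfPreserves F (Limits.biproduct.isBilimit Y))

variable [Small.{v} R] [Limits.PreservesFiniteLimits F] [Limits.PreservesFiniteColimits F]

lemma min_extGrade_obj_hom_le_extGrade_obj_hom_X₃ {S : ShortComplex (ModuleCat.{v} R)}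
    (hS : S.ShortExact) [Subsingleton (Abelian.Ext S.X₃ M 1)] :
    min (extGrade K (F.obj (.of R (S.X₂ ⟶ M)))) (extGrade K (F.obj (.of R (S.X₁ ⟶ M))) + 1) ≤
      extGrade K (F.obj (.of R (S.X₃ ⟶ M))) :=
  min_extGrade_le_extGrade_X₁ (S := (S.op.map ((linearYoneda R _).obj M)).map F) K
    ((shortExact_op_map_linearYoneda_obj R hS M).map_of_exact F)

theorem extGrade_obj_le_extGrade_obj_hom [IsNoetherianRing R] (X : ModuleCat.{v} R)
    [Module.Finite R X] (hX : ∀ i : ℕ, 0 < i → Subsingleton (Abelian.Ext X M i)) :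
    extGrade K (F.obj M) ≤ extGrade K (F.obj (.of R (X ⟶ M))) := by
  refine ENat.forall_natCast_le_iff_le.1 fun n hn ↦ ?_
  induction n generalizing X with
  | zero => exact bot_le
  | succ n ih =>
    obtain ⟨P, _, _, _, _, f, hf⟩ := Module.exists_finite_presentation R X
    have hS := LinearMap.shortExact_shortComplexKer hf
    have : Projective f.shortComplexKer.X₂ :=
      (IsProjective.iff_projective (R := R) P).1 inferInstance
    have : Subsingleton (Abelian.Ext f.shortComplexKer.X₃ M 1) := hX 1 one_pos
    have hker (i : ℕ) (hi : 0 < i) :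
        Subsingleton (Abelian.Ext (ModuleCat.of R (LinearMap.ker f)) M i) :=
      have : Subsingleton (Abelian.Ext f.shortComplexKer.X₃ M (1 + i)) := hX (1 + i) (by lia)
      subsingleton_ext_X₁_of_projective_X₂ hS M hi
    have hfree := extGrade_obj_le_extGrade_obj_hom_of_free F K M (.of R P)
    have hsyz := ih (.of R (LinearMap.ker f)) hker ((Nat.cast_le.2 n.le_succ).trans hn)
    refine (le_min (hn.trans hfree) ?_).trans
      (min_extGrade_obj_hom_le_extGrade_obj_hom_X₃ (S := f.shortComplexKer) F K M hS)
    push_cast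
    exact add_le_add_left hsyz 1

end HomModule

lemma moduleDepth_eq_extGrade (A : Type) [CommRing A] [IsLocalRing A] (M : Type) [AddCommGroup M]
    [Module A M] :
    moduleDepth A M =
      extGrade (ModuleCat.of A (IsLocalRing.ResidueField A)) (ModuleCat.of A M) := by
  simp only [moduleDepth, extGrade, subsingleton_derivedExt_iff_subsingleton_ext,
    not_subsingleton_iff_nontrivial]
  refine eq_of_forall_le_iff fun n ↦ ?_
  simp only [le_sInf_iff, Set.mem_ofPred_eq, le_iInf_iff]
  exact ⟨fun h i hi ↦ h i ⟨i, rfl, hi⟩, fun h _ ⟨i, hn, hi⟩ ↦ hn ▸ h i hi⟩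

/-- The functorial localization of `M` is the usual localized module; the former is encoded as a
`Shrink` of the latter. -/
noncomputable def localizedModuleFunctorObjIso {R : Type u} [CommRing R] (S : Submonoid R)
    (M : ModuleCat.{u} R) :
    (ModuleCat.localizedModuleFunctor S).obj M ≅ .of (Localization S) (LocalizedModule S M) :=
  (Shrink.linearEquiv (Localization S) (LocalizedModule S M)).toModuleIso

lemma moduleDepth_localizedModule {R : Type} [CommRing R] (p : Ideal R) [p.IsPrime] (N : Type)
    [AddCommGroup N] [Module R N] :
    moduleDepth (Localization.AtPrime p) (LocalizedModule p.primeCompl N) =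
      extGrade (.of _ (IsLocalRing.ResidueField (Localization.AtPrime p)))
        ((ModuleCat.localizedModuleFunctor p.primeCompl).obj (.of R N)) := by
  rw [moduleDepth_eq_extGrade]
  exact (extGrade_congr_right _ (localizedModuleFunctorObjIso p.primeCompl (.of R N))).symm

theorem stmt_9_general (R : Type) [CommRing R] [IsNoetherianRing R]
    (M : Type) [AddCommGroup M] [Module R M]
    (X : Type) [AddCommGroup X] [Module R X] [Module.Finite R X]
    (hext : ∀ i : ℕ, 0 < i →
      Subsingleton (ExtGroup R (ModuleCat.of R X) (ModuleCat.of R M) i))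
    (p : Ideal R) [p.IsPrime] :
    moduleDepth (Localization.AtPrime p) (LocalizedModule p.primeCompl M) ≤
      moduleDepth (Localization.AtPrime p) (LocalizedModule p.primeCompl (X →ₗ[R] M)) := by
  simp only [subsingleton_derivedExt_iff_subsingleton_ext] at hext
  let F := ModuleCat.localizedModuleFunctor.{0} p.primeCompl
  let homIso : ModuleCat.of R (ModuleCat.of R X ⟶ ModuleCat.of R M) ≅ .of R (X →ₗ[R] M) :=
    ModuleCat.homLinearEquiv.toModuleIso
  rw [moduleDepth_localizedModule, moduleDepth_localizedModule,
    ← extGrade_congr_right _ (F.mapIso homIso)]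
  exact extGrade_obj_le_extGrade_obj_hom F _ (.of R M) (.of R X) hext

/-- If `M` is finitely generated with `Rfd_R M ≤ 0` (i.e. `depth M_p ≥ depth R_p` for
every prime `p`) and `X` is finitely generated with `Ext_R^{>0}(X,M) = 0`, then
`Rfd_R Hom_R(X,M) ≤ 0`, i.e. `depth Hom_R(X,M)_p ≥ depth R_p` for every prime `p`. -/
theorem stmt_9 (R : Type) [CommRing R] [IsNoetherianRing R]
    (M : Type) [AddCommGroup M] [Module R M] [Module.Finite R M]
    (X : Type) [AddCommGroup X] [Module R X] [Module.Finite R X]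
    (hdepth : ∀ (p : Ideal R) [p.IsPrime],
      moduleDepth (Localization.AtPrime p) (Localization.AtPrime p) ≤
        moduleDepth (Localization.AtPrime p) (LocalizedModule p.primeCompl M))
    (hext : ∀ i : ℕ, 0 < i →
      Subsingleton (ExtGroup R (ModuleCat.of R X) (ModuleCat.of R M) i)) :
    ∀ (p : Ideal R) [p.IsPrime],
      moduleDepth (Localization.AtPrime p) (Localization.AtPrime p) ≤
        moduleDepth (Localization.AtPrime p) (LocalizedModule p.primeCompl (X →ₗ[R] M)) :=
  fun p _ ↦ (hdepth p).trans (stmt_9_general R M X hext p)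
end

section
/- Let R → S be a local homomorphism of Noetherian local rings with fd_R S < ∞. If S satisfies the Auslander–Reiten condition (ARC), then R satisfies (ARC). -/
open CategoryTheory

/-- `FlatDimLE R n M`: `M` admits a resolution of length at most `n` by flat `R`-modules. -/
inductive FlatDimLE (R : Type) [CommRing R] : ℕ → ModuleCat.{0} R → Prop
  | zero (M : ModuleCat.{0} R) (h : Module.Flat R M) : FlatDimLE R 0 M
  | succ {n : ℕ} {K F M : ModuleCat.{0} R} (hflat : Module.Flat R F)
      (f : K →ₗ[R] F) (g : F →ₗ[R] M)
      (hf : Function.Injective f) (hg : Function.Surjective g)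
      (hfg : LinearMap.range f = LinearMap.ker g)
      (hK : FlatDimLE R n K) : FlatDimLE R (n + 1) M

/-- The Auslander–Reiten condition (ARC) for a local ring: every finitely generated
module `M` with `Ext^{>0}(M, M ⊕ R) = 0` is free. -/
def ARC (R : Type) [CommRing R] : Prop :=
  ∀ M : ModuleCat.{0} R, Module.Finite R M →
    (∀ i : ℕ, 0 < i → Subsingleton (ExtGroup R M (ModuleCat.of R R) i)) →
    (∀ i : ℕ, 0 < i → Subsingleton (ExtGroup R M M i)) →
    Module.Free R M

/-
Let `N` be a finite `R`-module with `Ext^{>0}(N, N ⊕ R) = 0`. Finite flat dimension of `S` bounds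
`Tor^R(N, S)`, and replacing `N` by a syzygy preserves the hypotheses and lowers the bound. If the
syzygy is free, then `Ext¹` from `N` into it vanishes because `Ext^{>0}(N, R) = 0`, so the
presentation splits and `N` is free. One may therefore assume `Tor_{>0}^R(N, S) = 0`. Tensoring a
flat resolution of `S` with `N` then yields `Ext_R^{>0}(N, S ⊗ N) = 0`, which is
`Ext_S^{>0}(S ⊗ N, S ⊗ N) = 0`, and likewise `Ext_S^{>0}(S ⊗ N, S) = 0`. So `S ⊗ N` is free by
(ARC) for `S`, and freeness descends to `N`, as it is detected on residue fields.
-/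

namespace AuslanderReiten

universe v u w

section AbelianCategory

variable {C : Type u} [Category.{v} C] [Abelian C]

section

variable [HasExt.{w} C]

/-- `Ext^i(X, Y) = 0` for all `i > n`; for `n = 0` this is the orthogonality required by (ARC). -/
def ExtVanishesAbove (X Y : C) (n : ℕ) : Prop :=
  ∀ i, n < i → Subsingleton (Abelian.Ext X Y i)

lemma ExtVanishesAbove.mono {X Y : C} {m n : ℕ} (h : ExtVanishesAbove X Y m) (hmn : m ≤ n) :
    ExtVanishesAbove X Y n :=
  fun i hi ↦ h i (hmn.trans_lt hi)

lemma extVanishesAbove_of_hasInjectiveDimensionLE (X Y : C) (n : ℕ) [HasInjectiveDimensionLE Y n] :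
    ExtVanishesAbove X Y n :=
  fun i hi ↦ HasInjectiveDimensionLT.subsingleton Y (n + 1) i hi X

lemma extVanishesAbove_of_hasProjectiveDimensionLE (X Y : C) (n : ℕ)
    [HasProjectiveDimensionLE X n] : ExtVanishesAbove X Y n :=
  fun i hi ↦ HasProjectiveDimensionLT.subsingleton X (n + 1) i hi Y

lemma subsingleton_ext_congr_right (X : C) {Y Y' : C} (e : Y ≅ Y') (i : ℕ) :
    Subsingleton (Abelian.Ext X Y i) ↔ Subsingleton (Abelian.Ext X Y' i) :=
  ((Abelian.extFunctorObj X i).mapIso e).addCommGroupIsoToAddEquiv.toEquiv.subsingleton_congr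

variable {T : ShortComplex C} (hT : T.ShortExact)

include hT

lemma exists_comp_eq_of_subsingleton_ext_one {Y : C} (h : Subsingleton (Abelian.Ext T.X₃ Y 1))
    (φ : T.X₁ ⟶ Y) : ∃ ψ : T.X₂ ⟶ Y, T.f ≫ ψ = φ := by
  obtain ⟨x, hx⟩ := Abelian.Ext.contravariant_sequence_exact₁ hT Y (Abelian.Ext.mk₀ φ)
    (add_comm 1 0) (Subsingleton.elim _ _)
  obtain ⟨ψ, rfl⟩ := (Abelian.Ext.mk₀_bijective _ _).surjective x
  rw [Abelian.Ext.mk₀_comp_mk₀] at hx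
  exact ⟨ψ, (Abelian.Ext.mk₀_bijective _ _).injective hx⟩

lemma exists_lift_of_subsingleton_ext_one {X : C} (h : Subsingleton (Abelian.Ext X T.X₁ 1))
    (φ : X ⟶ T.X₃) : ∃ ψ : X ⟶ T.X₂, ψ ≫ T.g = φ := by
  obtain ⟨x, hx⟩ := Abelian.Ext.covariant_sequence_exact₃ X hT (Abelian.Ext.mk₀ φ)
    (zero_add 1) (Subsingleton.elim _ _)
  obtain ⟨ψ, rfl⟩ := (Abelian.Ext.mk₀_bijective _ _).surjective x
  rw [Abelian.Ext.mk₀_comp_mk₀] at hx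
  exact ⟨ψ, (Abelian.Ext.mk₀_bijective _ _).injective hx⟩

lemma subsingleton_ext_one_iff_exists_comp_eq [Projective T.X₂] (Y : C) :
    Subsingleton (Abelian.Ext T.X₃ Y 1) ↔ ∀ φ : T.X₁ ⟶ Y, ∃ ψ : T.X₂ ⟶ Y, T.f ≫ ψ = φ := by
  refine ⟨exists_comp_eq_of_subsingleton_ext_one hT,
    fun h ↦ subsingleton_of_forall_eq 0 fun α ↦ ?_⟩
  obtain ⟨x, rfl⟩ := Abelian.Ext.contravariant_sequence_exact₃ hT Y α
    (Abelian.Ext.eq_zero_of_projective _) (add_comm 1 0)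
  obtain ⟨φ, rfl⟩ := (Abelian.Ext.mk₀_bijective _ _).surjective x
  obtain ⟨ψ, rfl⟩ := h φ
  rw [← Abelian.Ext.mk₀_comp_mk₀, hT.extClass_comp_assoc]

lemma subsingleton_ext_X₁_iff [Projective T.X₂] (Y : C) (i : ℕ) :
    Subsingleton (Abelian.Ext T.X₁ Y (i + 1)) ↔ Subsingleton (Abelian.Ext T.X₃ Y (i + 2)) := by
  refine ⟨fun h ↦ subsingleton_of_forall_eq 0 fun α ↦ ?_,
    fun h ↦ subsingleton_of_forall_eq 0 fun α ↦ ?_⟩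
  · obtain ⟨x, rfl⟩ := Abelian.Ext.contravariant_sequence_exact₃ hT Y α
      (Abelian.Ext.eq_zero_of_projective _) (add_comm 1 (i + 1))
    rw [Subsingleton.elim x 0, Abelian.Ext.comp_zero]
  · obtain ⟨x, rfl⟩ := Abelian.Ext.contravariant_sequence_exact₁ hT Y α
      (add_comm 1 (i + 1)) (Subsingleton.elim _ _)
    rw [Abelian.Ext.eq_zero_of_projective x, Abelian.Ext.comp_zero]

lemma ExtVanishesAbove.syzygy [Projective T.X₂] {Y : C} {n : ℕ}
    (h : ExtVanishesAbove T.X₃ Y (n + 1)) : ExtVanishesAbove T.X₁ Y n := by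
  rintro (_ | i) hi
  · exact absurd hi n.not_lt_zero
  · exact (subsingleton_ext_X₁_iff hT Y i).2 (h _ (Nat.succ_lt_succ hi))

lemma ExtVanishesAbove.covariant_X₁ {Y : C} {n : ℕ} (h₃ : ExtVanishesAbove Y T.X₃ n)
    (h₂ : ExtVanishesAbove Y T.X₂ (n + 1)) : ExtVanishesAbove Y T.X₁ (n + 1) := by
  rintro (_ | i) hi
  · exact absurd hi (n + 1).not_lt_zero
  · have := h₃ i (Nat.lt_of_succ_lt_succ hi)
    have := h₂ (i + 1) hi
    refine subsingleton_of_forall_eq 0 fun α ↦ ?_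
    obtain ⟨x, rfl⟩ := Abelian.Ext.covariant_sequence_exact₁ Y hT α (Subsingleton.elim _ _) rfl
    rw [Subsingleton.elim x 0, Abelian.Ext.zero_comp]

lemma ExtVanishesAbove.covariant_X₃ {Y : C} {n : ℕ} (h₂ : ExtVanishesAbove Y T.X₂ n)
    (h₁ : ExtVanishesAbove Y T.X₁ (n + 1)) : ExtVanishesAbove Y T.X₃ n := by
  intro i hi
  have := h₂ i hi
  have := h₁ (i + 1) (Nat.succ_lt_succ hi)
  refine subsingleton_of_forall_eq 0 fun α ↦ ?_
  obtain ⟨x, rfl⟩ := Abelian.Ext.covariant_sequence_exact₃ Y hT α rfl (Subsingleton.elim _ _)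
  rw [Subsingleton.elim x 0, Abelian.Ext.zero_comp]

lemma ExtVanishesAbove.self_syzygy [Projective T.X₂] {n : ℕ} (h₃ : ExtVanishesAbove T.X₃ T.X₃ n)
    (h₂ : ExtVanishesAbove T.X₃ T.X₂ (n + 1)) : ExtVanishesAbove T.X₁ T.X₁ n :=
  .syzygy hT (.covariant_X₁ hT h₃ h₂)

lemma projective_X₃_of_subsingleton_ext_one [Projective T.X₂]
    (h : Subsingleton (Abelian.Ext T.X₃ T.X₁ 1)) : Projective T.X₃ := by
  obtain ⟨σ, hσ⟩ := exists_lift_of_subsingleton_ext_one hT h (𝟙 T.X₃)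
  exact Retract.projective ⟨σ, T.g, hσ⟩

end

section DerivedFunctor

variable {X Y : C} (P : ProjectiveResolution X) (i : ℕ)

lemma subsingleton_abelianExt_iff_of_resolution [HasExt.{w} C] :
    Subsingleton (Abelian.Ext X Y (i + 1)) ↔
      ∀ f : P.complex.X (i + 1) ⟶ Y, P.complex.d (i + 2) (i + 1) ≫ f = 0 →
        ∃ g : P.complex.X i ⟶ Y, P.complex.d (i + 1) i ≫ g = f := by
  refine ⟨fun _ f hf ↦ (P.extMk_eq_zero_iff f (i + 2) rfl hf i rfl).1 (Subsingleton.elim _ _),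
    fun h ↦ subsingleton_of_forall_eq 0 fun α ↦ ?_⟩
  obtain ⟨f, hf, rfl⟩ := P.extMk_surjective α (i + 2) rfl
  exact (P.extMk_eq_zero_iff f (i + 2) rfl hf i rfl).2 (h f hf)

variable (R : Type*) [Ring R] [Linear R C] [EnoughProjectives C]

lemma subsingleton_derivedExt_iff_of_resolution :
    Subsingleton (((Ext R C (i + 1)).obj (Opposite.op X)).obj Y) ↔
      ∀ f : P.complex.X (i + 1) ⟶ Y, P.complex.d (i + 2) (i + 1) ≫ f = 0 →
        ∃ g : P.complex.X i ⟶ Y, P.complex.d (i + 1) i ≫ g = f := by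
  rw [(P.isoExt (R := R) (i + 1) Y).toLinearEquiv.toEquiv.subsingleton_congr,
    ← ModuleCat.isZero_iff_subsingleton, ← HomologicalComplex.exactAt_iff_isZero_homology,
    HomologicalComplex.exactAt_iff' _ i (i + 1) (i + 2) (by simp) (by simp),
    ShortComplex.moduleCat_exact_iff]
  rfl

lemma subsingleton_derivedExt_iff [HasExt.{w} C] (X Y : C) {i : ℕ} (hi : 0 < i) :
    Subsingleton (((Ext R C i).obj (Opposite.op X)).obj Y) ↔
      Subsingleton (Abelian.Ext X Y i) := by
  obtain ⟨i, rfl⟩ := Nat.exists_eq_add_one_of_ne_zero hi.ne'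
  have P := projectiveResolution X
  rw [subsingleton_derivedExt_iff_of_resolution P i R, subsingleton_abelianExt_iff_of_resolution P]

end DerivedFunctor

end AbelianCategory

open scoped TensorProduct

section CharacterModule

variable {R : Type u} [CommRing R]

section

variable {K P M : Type*} [AddCommGroup K] [Module R K] [AddCommGroup P] [Module R P]
  [AddCommGroup M] [Module R M] {f : K →ₗ[R] P} {g : P →ₗ[R] M}

lemma exact_characterModule_dual (hg : Function.Surjective g) (hfg : Function.Exact f g) :
    Function.Exact (CharacterModule.dual g) (CharacterModule.dual f) := by
  intro c
  refine ⟨fun hc ↦ ?_, ?_⟩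
  · have hker : g.toAddMonoidHom.ker ≤ c.ker := by
      intro x hx
      obtain ⟨y, rfl⟩ := (hfg x).1 hx
      exact DFunLike.congr_fun hc y
    exact ⟨g.toAddMonoidHom.liftOfSurjective hg ⟨c, hker⟩,
      AddMonoidHom.liftOfRightInverse_comp _ _ _ _⟩
  · rintro ⟨c, rfl⟩
    rw [← LinearMap.comp_apply, ← CharacterModule.dual_comp, hfg.linearMap_comp_eq_zero,
      CharacterModule.dual_zero, LinearMap.zero_apply]

end

section

variable {K F L : Type v} [AddCommGroup K] [Module R K] [AddCommGroup F] [Module R F]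
  [AddCommGroup L] [Module R L]

lemma shortExact_characterModule {f : K →ₗ[R] F} {g : F →ₗ[R] L} (hf : Function.Injective f)
    (hg : Function.Surjective g) (hfg : Function.Exact f g) :
    (ModuleCat.shortComplexOfCompEqZero _ _
      (exact_characterModule_dual hg hfg).linearMap_comp_eq_zero).ShortExact :=
  ModuleCat.shortComplex_shortExact _ (exact_characterModule_dual hg hfg)
    (CharacterModule.dual_injective_of_surjective _ hg)
    (CharacterModule.dual_surjective_of_injective _ hf)

end

variable [Small.{v} R]

lemma injective_characterModule_of_flat (F : Type v) [AddCommGroup F] [Module R F]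
    [Module.Flat R F] : Injective (ModuleCat.of R (CharacterModule F)) :=
  haveI := Module.Flat.iff_characterModule_injective.1 ‹Module.Flat R F›
  Module.injective_object_of_injective_module R (CharacterModule F)

/-- `Tor_i(N, L) = 0` for all `i > n`. Since `Tor_i(N, L)^∨ ≅ Ext^i(N, L^∨)` for the faithful exact
duality `L^∨ = Hom_ℤ(L, ℚ/ℤ)`, this is encoded as the vanishing of `Ext` into the character
module. -/
abbrev TorVanishesAbove (N : ModuleCat.{v} R) (L : Type v) [AddCommGroup L] [Module R L]
    (n : ℕ) : Prop :=
  ExtVanishesAbove N (ModuleCat.of R (CharacterModule L)) n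

lemma lTensor_injective_of_subsingleton_ext {T : ShortComplex (ModuleCat.{v} R)}
    (hT : T.ShortExact) (L : Type v) [AddCommGroup L] [Module R L]
    (h : Subsingleton (Abelian.Ext T.X₃ (ModuleCat.of R (CharacterModule L)) 1)) :
    Function.Injective (T.f.hom.lTensor L) := by
  rw [LinearMap.lTensor_inj_iff_rTensor_inj, rTensor_injective_iff_lcomp_surjective]
  intro φ
  obtain ⟨ψ, hψ⟩ := exists_comp_eq_of_subsingleton_ext_one hT h (ModuleCat.ofHom φ)
  exact ⟨ψ.hom, congrArg ModuleCat.Hom.hom hψ⟩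

lemma rTensor_injective_of_subsingleton_ext {K F L : Type v} [AddCommGroup K] [Module R K]
    [AddCommGroup F] [Module R F] [AddCommGroup L] [Module R L] {f : K →ₗ[R] F} {g : F →ₗ[R] L}
    (hf : Function.Injective f) (hg : Function.Surjective g) (hfg : Function.Exact f g)
    (X : ModuleCat.{v} R)
    (h : Subsingleton (Abelian.Ext X (ModuleCat.of R (CharacterModule L)) 1)) :
    Function.Injective (f.rTensor X) := by
  rw [← LinearMap.lTensor_inj_iff_rTensor_inj, ← CharacterModule.dual_surjective_iff_injective]
  intro c
  obtain ⟨ψ, hψ⟩ := exists_lift_of_subsingleton_ext_one (shortExact_characterModule hf hg hfg) h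
    (ModuleCat.ofHom (CharacterModule.homEquiv.symm c))
  refine ⟨CharacterModule.homEquiv ψ.hom, CharacterModule.homEquiv.symm.injective ?_⟩
  exact congrArg ModuleCat.Hom.hom hψ

end CharacterModule

section FlatCoefficients

variable {R : Type u} [CommRing R]

section

variable (N X F : Type*) [AddCommGroup N] [Module R N] [AddCommGroup X] [Module R X]
  [AddCommGroup F] [Module R F]

lemma lTensorHomToHomLTensor_surjective [Module.FinitePresentation R N] [Module.Flat R F] :
    Function.Surjective (TensorProduct.lTensorHomToHomLTensor (.id R) N F X) := by
  obtain ⟨n, m, f, g, hf, hfg⟩ := Module.FinitePresentation.exists_fin' R N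
  have bijective_of_free (k : ℕ) :
      Function.Bijective (TensorProduct.lTensorHomToHomLTensor (.id R) (Fin k → R) F X) := by
    rw [← lTensorHomEquivHomLTensor_toLinearMap]
    exact (lTensorHomEquivHomLTensor R (Fin k → R) F X).bijective
  exact LinearMap.surjective_of_surjective_of_injective_of_left_exact
    ((f.lcomp R X).lTensor F) ((g.lcomp R X).lTensor F)
    (f.lcomp R (F ⊗[R] X)) (g.lcomp R (F ⊗[R] X)) _ _ _
    (TensorProduct.ext' fun _ _ ↦ rfl) (TensorProduct.ext' fun _ _ ↦ rfl)
    (Module.Flat.lTensor_exact F (LinearMap.exact_lcomp_of_exact_of_surjective X hfg hf))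
    (LinearMap.exact_lcomp_of_exact_of_surjective _ hfg hf)
    (bijective_of_free _).surjective (bijective_of_free _).injective
    (LinearMap.lcomp_injective_of_surjective f hf)

lemma lcomp_surjective_of_flat {K P : Type*} [AddCommGroup K] [Module R K] [AddCommGroup P]
    [Module R P] [Module.FinitePresentation R K] [Module.Flat R F] {f : K →ₗ[R] P}
    (hf : Function.Surjective (f.lcomp R X)) : Function.Surjective (f.lcomp R (F ⊗[R] X)) := by
  intro φ
  obtain ⟨t, rfl⟩ := lTensorHomToHomLTensor_surjective K X F φ
  obtain ⟨s, rfl⟩ := LinearMap.lTensor_surjective F hf t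
  refine ⟨TensorProduct.lTensorHomToHomLTensor (.id R) P F X s, ?_⟩
  have natural : f.lcomp R (F ⊗[R] X) ∘ₗ TensorProduct.lTensorHomToHomLTensor (.id R) P F X =
      TensorProduct.lTensorHomToHomLTensor (.id R) K F X ∘ₗ (f.lcomp R X).lTensor F :=
    TensorProduct.ext' fun _ _ ↦ rfl
  exact LinearMap.congr_fun natural s

end

section

variable [IsNoetherianRing R] [Small.{v} R] (N : ModuleCat.{v} R) [Module.Finite R N]

lemma subsingleton_ext_tensor_of_flat (X F : Type v) [AddCommGroup X] [Module R X]
    [AddCommGroup F] [Module R F] [Module.Flat R F] (i : ℕ)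
    (h : Subsingleton (Abelian.Ext N (ModuleCat.of R X) (i + 1))) :
    Subsingleton (Abelian.Ext N (ModuleCat.of R (F ⊗[R] X)) (i + 1)) := by
  induction i generalizing N with
    (obtain ⟨P, _, _, _, _, g, hg⟩ := Module.exists_finite_presentation R N
     have hT := LinearMap.shortExact_shortComplexKer hg)
  | zero =>
    have := Module.finitePresentation_of_finite R g.ker
    have restrict_surjective : Function.Surjective (g.ker.subtype.lcomp R X) := by
      intro φ
      obtain ⟨ψ, hψ⟩ := exists_comp_eq_of_subsingleton_ext_one hT h (ModuleCat.ofHom φ)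
      exact ⟨ψ.hom, congrArg ModuleCat.Hom.hom hψ⟩
    refine (subsingleton_ext_one_iff_exists_comp_eq hT _).2 fun φ ↦ ?_
    obtain ⟨ψ, hψ⟩ := lcomp_surjective_of_flat X F restrict_surjective φ.hom
    exact ⟨ModuleCat.ofHom ψ, ModuleCat.hom_ext hψ⟩
  | succ i ih =>
    exact (subsingleton_ext_X₁_iff hT _ i).1
      (ih (ModuleCat.of R g.ker) ((subsingleton_ext_X₁_iff hT _ i).2 h))

lemma extVanishesAbove_tensor_of_flat {X : Type v} [AddCommGroup X] [Module R X] (F : Type v)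
    [AddCommGroup F] [Module R F] [Module.Flat R F] {n : ℕ}
    (h : ExtVanishesAbove N (ModuleCat.of R X) n) :
    ExtVanishesAbove N (ModuleCat.of R (F ⊗[R] X)) n := by
  rintro (_ | i) hi
  · exact absurd hi n.not_lt_zero
  · exact subsingleton_ext_tensor_of_flat N X F i (h _ hi)

end

end FlatCoefficients

section FiniteFlatDimension

variable {R : Type} [CommRing R] {n : ℕ} {L : ModuleCat.{0} R}

lemma hasInjectiveDimensionLE_characterModule (hL : FlatDimLE R n L) :
    HasInjectiveDimensionLE (ModuleCat.of R (CharacterModule L)) n := by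
  induction hL with
  | zero L h =>
    have := injective_characterModule_of_flat (R := R) L
    exact inferInstanceAs (HasInjectiveDimensionLT _ 1)
  | @succ n K F L hflat f g hf hg hfg _ ih =>
    have := injective_characterModule_of_flat (R := R) F
    have hT := shortExact_characterModule hf hg (LinearMap.exact_iff.2 hfg.symm)
    exact hT.hasInjectiveDimensionLT_X₁ (n + 1) ih inferInstance

lemma extVanishesAbove_tensor_of_flatDimLE [IsNoetherianRing R] (hL : FlatDimLE R n L)
    {N X : ModuleCat.{0} R} [Module.Finite R N] {m : ℕ} (hNX : ExtVanishesAbove N X m)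
    (hXL : TorVanishesAbove X L 0) :
    ExtVanishesAbove N (ModuleCat.of R (L ⊗[R] X)) m := by
  induction hL with
  | zero L h => exact extVanishesAbove_tensor_of_flat N L hNX
  | @succ _ K F L hflat f g hf hg hfg _ ih =>
    have exact_fg : Function.Exact f g := LinearMap.exact_iff.2 hfg.symm
    have exact_rTensor := rTensor_exact X exact_fg hg
    have shortExact_rTensor := ModuleCat.shortComplex_shortExact
      (ModuleCat.shortComplexOfCompEqZero _ _ exact_rTensor.linearMap_comp_eq_zero) exact_rTensor
      (rTensor_injective_of_subsingleton_ext hf hg exact_fg X (hXL 1 zero_lt_one))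
      (LinearMap.rTensor_surjective X hg)
    have := injective_characterModule_of_flat (R := R) F
    have tor_K : TorVanishesAbove X K 0 :=
      ExtVanishesAbove.covariant_X₃ (shortExact_characterModule hf hg exact_fg)
        (extVanishesAbove_of_hasInjectiveDimensionLE _ _ 0) (hXL.mono zero_le_one)
    exact ExtVanishesAbove.covariant_X₃ shortExact_rTensor
      (extVanishesAbove_tensor_of_flat N F hNX) ((ih tor_K).mono m.le_succ)

lemma extVanishesAbove_of_flatDimLE [IsNoetherianRing R] (hL : FlatDimLE R n L)
    {N : ModuleCat.{0} R} [Module.Finite R N] {m : ℕ}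
    (hN : ExtVanishesAbove N (ModuleCat.of R R) m) : ExtVanishesAbove N L m := fun i hi ↦
  (subsingleton_ext_congr_right N (TensorProduct.rid R L).toModuleIso i).1
    (extVanishesAbove_tensor_of_flatDimLE hL hN
      (extVanishesAbove_of_hasProjectiveDimensionLE _ _ 0) i hi)

end FiniteFlatDimension

section BaseChange

variable {R : Type u} [CommRing R] [Small.{v} R] (S : Type v) [CommRing S] [Algebra R S]

lemma exists_shortExact_baseChange {T : ShortComplex (ModuleCat.{v} R)} (hT : T.ShortExact)
    (h : Subsingleton (Abelian.Ext T.X₃ (ModuleCat.of R (CharacterModule S)) 1)) :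
    ∃ hfg : T.g.hom.baseChange S ∘ₗ T.f.hom.baseChange S = 0,
      (ModuleCat.shortComplexOfCompEqZero _ _ hfg).ShortExact :=
  have hexact : Function.Exact (T.f.hom.baseChange S) (T.g.hom.baseChange S) :=
    lTensor_exact S ((ShortComplex.ShortExact.moduleCat_exact_iff_function_exact T).1 hT.exact)
      ((ModuleCat.epi_iff_surjective T.g).1 hT.epi_g)
  ⟨hexact.linearMap_comp_eq_zero, ModuleCat.shortComplex_shortExact _ hexact
    (lTensor_injective_of_subsingleton_ext hT S h)
    (LinearMap.lTensor_surjective S ((ModuleCat.epi_iff_surjective T.g).1 hT.epi_g))⟩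

lemma subsingleton_ext_baseChange {N : ModuleCat.{v} R} (hN : TorVanishesAbove N S 0)
    (Y : Type v) [AddCommGroup Y] [Module R Y] [Module S Y] [IsScalarTower R S Y] (i : ℕ)
    (h : Subsingleton (Abelian.Ext N (ModuleCat.of R Y) (i + 1))) :
    Subsingleton (Abelian.Ext (ModuleCat.of S (S ⊗[R] N)) (ModuleCat.of S Y) (i + 1)) := by
  induction i generalizing N with
    (have hT := N.shortExact_projectiveShortComplex
     obtain ⟨hfg, hT_S⟩ := exists_shortExact_baseChange S hT (hN 1 zero_lt_one))
  | zero =>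
    refine (subsingleton_ext_one_iff_exists_comp_eq hT_S _).2 fun φ ↦ ?_
    obtain ⟨ψ, hψ⟩ := exists_comp_eq_of_subsingleton_ext_one hT h (ModuleCat.ofHom
      (φ.hom.restrictScalars R ∘ₗ TensorProduct.mk R S _ 1))
    have restrict_eq (x) : ψ.hom (N.projectiveShortComplex.f.hom x) = φ.hom (1 ⊗ₜ x) :=
      LinearMap.congr_fun (congrArg ModuleCat.Hom.hom hψ) x
    refine ⟨ModuleCat.ofHom (ψ.hom.liftBaseChange S), ModuleCat.hom_ext ?_⟩
    refine TensorProduct.AlgebraTensorModule.ext fun s x ↦ ?_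
    calc s • ψ.hom (N.projectiveShortComplex.f.hom x) = φ.hom (s • 1 ⊗ₜ x) := by
          rw [restrict_eq, map_smul]
      _ = φ.hom (s ⊗ₜ x) := by rw [TensorProduct.smul_tmul', smul_eq_mul, mul_one]
  | succ i ih =>
    exact (subsingleton_ext_X₁_iff hT_S _ i).1
      (ih (ExtVanishesAbove.syzygy hT (hN.mono zero_le_one)) ((subsingleton_ext_X₁_iff hT _ i).2 h))

end BaseChange

section FreenessDescent

section

variable {R : Type*} [CommRing R] {K P : Type*} [AddCommGroup K] [Module R K] [AddCommGroup P]
  [Module R P] (f : K →ₗ[R] P)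

open TensorProduct.AlgebraTensorModule in
lemma lTensor_baseChange_injective_iff (A B : Type*) [CommRing A] [Algebra R A] [AddCommGroup B]
    [Module R B] [Module A B] [IsScalarTower R A B] :
    Function.Injective ((f.baseChange A).lTensor B) ↔ Function.Injective (f.lTensor B) := by
  have natural : f.lTensor B ∘ cancelBaseChange R A A B K =
      cancelBaseChange R A A B P ∘ (f.baseChange A).lTensor B :=
    funext (LinearMap.congr_fun (lTensor_comp_cancelBaseChange R A A f))
  rw [← EquivLike.comp_injective _ (cancelBaseChange R A A B P), ← natural,
    EquivLike.injective_comp]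

lemma lTensor_residueField_injective_iff_baseChange [IsLocalRing R] (S : Type*) [CommRing S]
    [IsLocalRing S] [Algebra R S] [IsLocalHom (algebraMap R S)] :
    Function.Injective (f.lTensor (IsLocalRing.ResidueField R)) ↔
      Function.Injective ((f.baseChange S).lTensor (IsLocalRing.ResidueField S)) := by
  let k := IsLocalRing.ResidueField R
  let l := IsLocalRing.ResidueField S
  calc Function.Injective (f.lTensor k)
      ↔ Function.Injective ((f.baseChange k).lTensor l) :=
        (Module.FaithfullyFlat.lTensor_injective_iff_injective k l (f.baseChange k)).symm
    _ ↔ Function.Injective (f.lTensor l) := lTensor_baseChange_injective_iff f k l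
    _ ↔ Function.Injective ((f.baseChange S).lTensor l) :=
        (lTensor_baseChange_injective_iff f S l).symm

end

lemma free_of_flat_baseChange {R : Type u} [CommRing R] [IsNoetherianRing R] [IsLocalRing R]
    [Small.{v} R] (S : Type v) [CommRing S] [IsLocalRing S] [Algebra R S]
    [IsLocalHom (algebraMap R S)] (N : ModuleCat.{v} R) [Module.Finite R N]
    (hN : Subsingleton (Abelian.Ext N (ModuleCat.of R (CharacterModule S)) 1))
    [Module.Flat S (S ⊗[R] N)] : Module.Free R N := by
  obtain ⟨P, _, _, _, _, g, hg⟩ := Module.exists_finite_presentation R N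
  have hfg : Function.Exact g.ker.subtype g := LinearMap.exact_subtype_ker_map g
  have baseChange_injective : Function.Injective (g.ker.subtype.baseChange S) :=
    lTensor_injective_of_subsingleton_ext (LinearMap.shortExact_shortComplexKer hg) S hN
  refine Module.free_of_lTensor_residueField_injective g.ker.subtype g hg hfg
    ((lTensor_residueField_injective_iff_baseChange _ S).2 ?_)
  exact LinearMap.lTensor_injective_of_exact_of_flat (g.baseChange S)
    (LinearMap.lTensor_surjective S hg) _ baseChange_injective (lTensor_exact S hfg hg) _

end FreenessDescent

section Descent

lemma arc_iff (R : Type) [CommRing R] :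
    ARC R ↔ ∀ N : ModuleCat.{0} R, Module.Finite R N →
      ExtVanishesAbove N (ModuleCat.of R R) 0 → ExtVanishesAbove N N 0 → Module.Free R N := by
  have extVanishesAbove_iff (X Y : ModuleCat.{0} R) :
      ExtVanishesAbove X Y 0 ↔ ∀ i, 0 < i → Subsingleton (ExtGroup R X Y i) :=
    forall₂_congr fun _ hi ↦ (subsingleton_derivedExt_iff R X Y hi).symm
  simp only [ARC, extVanishesAbove_iff]

variable {R S : Type} [CommRing R] [CommRing S] [IsNoetherianRing R] [Algebra R S] {n : ℕ}

lemma extVanishesAbove_baseChange (hfd : FlatDimLE R n (ModuleCat.of R S)) {N X : ModuleCat.{0} R}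
    [Module.Finite R N] (hN : TorVanishesAbove N S 0) (hX : TorVanishesAbove X S 0) {m : ℕ}
    (hNX : ExtVanishesAbove N X m) :
    ExtVanishesAbove (ModuleCat.of S (S ⊗[R] N)) (ModuleCat.of S (S ⊗[R] X)) m := by
  rintro (_ | i) hi
  · exact absurd hi m.not_lt_zero
  · exact subsingleton_ext_baseChange S hN (S ⊗[R] X) i
      (extVanishesAbove_tensor_of_flatDimLE hfd hNX hX _ hi)

variable [IsLocalRing R] [IsLocalRing S] [IsLocalHom (algebraMap R S)]

lemma free_of_torVanishesAbove_zero (hfd : FlatDimLE R n (ModuleCat.of R S)) (hS : ARC S)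
    (N : ModuleCat.{0} R) [Module.Finite R N] (hNR : ExtVanishesAbove N (ModuleCat.of R R) 0)
    (hNN : ExtVanishesAbove N N 0) (hNS : TorVanishesAbove N S 0) : Module.Free R N := by
  have hSR : ExtVanishesAbove (ModuleCat.of S (S ⊗[R] N)) (ModuleCat.of S S) 0 := fun i hi ↦
    (subsingleton_ext_congr_right _ (TensorProduct.AlgebraTensorModule.rid R S S).toModuleIso i).1
      (extVanishesAbove_baseChange hfd hNS
        (extVanishesAbove_of_hasProjectiveDimensionLE _ _ 0) hNR i hi)
  have baseChange_free : Module.Free S (S ⊗[R] N) := (arc_iff S).1 hS (ModuleCat.of S (S ⊗[R] N))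
    (inferInstanceAs (Module.Finite S (S ⊗[R] N))) hSR
    (extVanishesAbove_baseChange hfd hNS hNS hNN)
  have : Module.Flat S (S ⊗[R] N) := .of_free
  exact free_of_flat_baseChange S N (hNS 1 zero_lt_one)

lemma free_of_torVanishesAbove (hfd : FlatDimLE R n (ModuleCat.of R S)) (hS : ARC S) {m : ℕ}
    (N : ModuleCat.{0} R) [Module.Finite R N] (hNR : ExtVanishesAbove N (ModuleCat.of R R) 0)
    (hNN : ExtVanishesAbove N N 0) (hNS : TorVanishesAbove N S m) : Module.Free R N := by
  induction m generalizing N with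
  | zero => exact free_of_torVanishesAbove_zero hfd hS N hNR hNN hNS
  | succ m ih =>
    obtain ⟨P, _, _, _, _, g, hg⟩ := Module.exists_finite_presentation R N
    have hT := LinearMap.shortExact_shortComplexKer hg
    have ext_flat (F : ModuleCat.{0} R) [Module.Flat R F] : ExtVanishesAbove N F 0 :=
      extVanishesAbove_of_flatDimLE (.zero F ‹_›) hNR
    have ker_free : Module.Free R g.ker := ih (ModuleCat.of R g.ker)
      (.syzygy hT (hNR.mono zero_le_one))
      (.self_syzygy hT hNN ((ext_flat (ModuleCat.of R P)).mono zero_le_one))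
      (.syzygy hT hNS)
    have : Projective N :=
      projective_X₃_of_subsingleton_ext_one hT (ext_flat (ModuleCat.of R g.ker) 1 zero_lt_one)
    exact Module.free_of_flat_of_isLocalRing

end Descent

end AuslanderReiten

open AuslanderReiten in
theorem stmt_14_general (R S : Type) [CommRing R] [CommRing S] [IsNoetherianRing R]
    [IsLocalRing R] [IsLocalRing S] [Algebra R S] (hloc : IsLocalHom (algebraMap R S))
    (hfd : ∃ n : ℕ, FlatDimLE R n (ModuleCat.of R S)) (hS : ARC S) : ARC R := by
  obtain ⟨n, hfd⟩ := hfd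
  refine (arc_iff R).2 fun N _ hNR hNN ↦ ?_
  have := hasInjectiveDimensionLE_characterModule hfd
  exact free_of_torVanishesAbove hfd hS N hNR hNN
    (extVanishesAbove_of_hasInjectiveDimensionLE N _ n)

/-- Descent of (ARC) along a local homomorphism of finite flat dimension. -/
theorem stmt_14 (R S : Type) [CommRing R] [CommRing S]
    [IsNoetherianRing R] [IsNoetherianRing S] [IsLocalRing R] [IsLocalRing S]
    [Algebra R S] (hloc : IsLocalHom (algebraMap R S))
    (hfd : ∃ n : ℕ, FlatDimLE R n (ModuleCat.of R S))
    (hS : ARC S) : ARC R :=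
  stmt_14_general R S hloc hfd hS
end
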